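/- Let A be a C*-algebra and let a ∈ A. Then the smallest norm-closed subtriple of A containing a equals the smallest norm-closed subtriple of A containing a a* a, where a subtriple is a complex-linear subspace closed under the triple product {x,y,z} = (x y* z + z y* x)/2. -/

import Mathlib

/-- A norm-closed subtriple of a C*-algebra `A`: a norm-closed complex-linear
subspace closed under the triple product `{x,y,z} = (x y* z + z y* x)/2`. -/
def IsClosedSubtriple {A : Type*} [NonUnitalNormedRing A] [StarRing A]
    [NormedSpace ℂ A] (S : Set A) : Prop :=
  IsClosed S ∧ (∃ p : Submodule ℂ A, (p : Set A) = S) ∧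
    ∀ x ∈ S, ∀ y ∈ S, ∀ z ∈ S, (2 : ℂ)⁻¹ • (x * star y * z + z * star y * x) ∈ S

set_option maxHeartbeats 2000000 in
theorem key {A : Type*} [NonUnitalCStarAlgebra A] (a : A) (p : Submodule ℂ A) (hc : IsClosed (p : Set A))
  (hp : ∀ x ∈ p, ∀ y ∈ p, ∀ z ∈ p, (2 : ℂ)⁻¹ • (x * star y * z + z * star y * x) ∈ p)
  (hb : a * star a * a ∈ p) : a ∈ p := by
  let _ := CStarAlgebra.spectralOrder A
  have := CStarAlgebra.spectralOrderedRing A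
  obtain ⟨h, hh⟩ : ∃ h, h = star a * a := ⟨_, rfl⟩
  have hpos : 0 ≤ h := hh ▸ star_mul_self_nonneg a
  have hsa : IsSelfAdjoint h := .of_nonneg hpos
  have hspec : ∀ t ∈ quasispectrum ℝ h, 0 ≤ t ∧ t ≤ ‖h‖ := fun t ht =>
    ⟨quasispectrum_nonneg_of_nonneg h hpos t ht, by
      exact (le_abs_self t).trans (NonUnitalIsometricContinuousFunctionalCalculus.norm_quasispectrum_le h ht hsa)⟩
  have hid : cfcₙ (fun t : ℝ => t) h = h := cfcₙ_id' ℝ h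
  have hL : ∀ f : ℝ → ℝ, Continuous f → f 0 = 0 → h * cfcₙ f h = cfcₙ (fun t => t * f t) h := by
    intro f hf hf0
    rw [cfcₙ_mul (fun t => t) f h continuousOn_id rfl hf.continuousOn hf0, hid]
  have hR : ∀ f : ℝ → ℝ, Continuous f → f 0 = 0 → cfcₙ f h * h = cfcₙ (fun t => f t * t) h := by
    intro f hf hf0
    rw [cfcₙ_mul f (fun t => t) h hf.continuousOn hf0 continuousOn_id rfl, hid]
  have hmon : ∀ n : ℕ, a * cfcₙ (fun t : ℝ => t * (t^3)^n) h ∈ p := by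
    intro n
    induction n with
    | zero => 
      have : (fun t : ℝ => t * (t^3)^0) = fun t => t := by ext t; simp
      rw [this, hid, hh, ← mul_assoc]; exact hb
    | succ n ih =>
      have := hp _ ih _ hb _ hb
      set k := cfcₙ (fun t : ℝ => t * (t^3)^n) h with hk
      have hkc : Continuous (fun t : ℝ => t * (t^3)^n) := by fun_prop
      have e : cfcₙ (fun t : ℝ => t * (t^3)^(n+1)) h = h * (h * (h * k)) := by
        rw [hk, hL _ hkc (by simp), hL _ (by fun_prop) (by simp), hL _ (by fun_prop) (by simp)]
        congr 1; ext t; ring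
      have hcm : k * h = h * k := by
        rw [hk, hL _ hkc (by simp), hR _ hkc (by simp)]
        congr 1; ext t; ring
      have hcm' : ∀ x, k * (h * x) = h * (k * x) := fun x => by rw [← mul_assoc, hcm, mul_assoc]
      have e1 : a * k * star (a * star a * a) * (a * star a * a) = a * (h * (h * (h * k))) := by
        have : a * k * star (a * star a * a) * (a * star a * a) = a * (k * (h * (h * h))) := by
          simp only [hh, star_mul, star_star, mul_assoc]
        rw [this, hcm', hcm', hcm]
      have e2 : (a * star a * a) * star (a * star a * a) * (a * k) = a * (h * (h * (h * k))) := by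
        simp only [hh, star_mul, star_star, mul_assoc]
      rw [e1, e2, ← two_smul ℂ, smul_smul] at this
      rw [e]; simpa using this
  have hpoly : ∀ q : Polynomial ℝ, a * cfcₙ (fun t : ℝ => t * q.eval (t^3)) h ∈ p := by
    intro q
    induction q using Polynomial.induction_on' with
    | add q r hq hr =>
      have : (fun t : ℝ => t * (q + r).eval (t^3)) = fun t => t * q.eval (t^3) + t * r.eval (t^3) := by
        ext t; simp [mul_add]
      rw [this, cfcₙ_add _ _ h (by fun_prop) (by simp) (by fun_prop) (by simp), mul_add]
      exact p.add_mem hq hr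
    | monomial n c =>
      have : (fun t : ℝ => t * (Polynomial.monomial n c).eval (t^3)) = fun t => c * (t * (t^3)^n) := by
        ext t; simp; ring
      rw [this, cfcₙ_const_mul c _ h (by fun_prop) (by simp), mul_smul_comm, ← Complex.coe_smul]
      exact p.smul_mem _ (hmon n)
  have hnorm : ∀ q : Polynomial ℝ, ∀ C : ℝ, 0 ≤ C →
      (∀ t, 0 ≤ t → t ≤ ‖h‖ → t * (1 - t * q.eval (t^3))^2 ≤ C) →
      ‖a - a * cfcₙ (fun t : ℝ => t * q.eval (t^3)) h‖^2 ≤ C := by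
    intro q C hC hq
    set k := cfcₙ (fun t : ℝ => t * q.eval (t^3)) h with hk
    have ks : star k = k := (cfcₙ_predicate (R := ℝ) _ h : IsSelfAdjoint _)
    have : star (a - a * k) * (a - a * k) = cfcₙ (fun t : ℝ => t * (1 - t * q.eval (t^3))^2) h := by
      have : star (a - a * k) * (a - a * k) = h - h * k - (k * h - k * (h * k)) := by
        simp only [hh, star_sub, star_mul, ks, mul_assoc, sub_mul, mul_sub]; abel
      rw [this, hk]
      have : (fun t : ℝ => t * (1 - t * q.eval (t^3))^2) = fun t => t - t * (t * q.eval (t^3))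
        - ((t * q.eval (t^3)) * t - (t * q.eval (t^3)) * (t * (t * q.eval (t^3)))) := by
        ext t; ring
      have hkc : Continuous (fun t : ℝ => t * q.eval (t^3)) := by fun_prop
      have hk0 : (fun t : ℝ => t * q.eval (t^3)) 0 = 0 := by simp
      rw [this, cfcₙ_sub _ _ h (by fun_prop) (by simp) (by fun_prop) (by simp),
        cfcₙ_sub _ _ h (by fun_prop) (by simp) (by fun_prop) (by simp),
        cfcₙ_sub _ _ h (by fun_prop) (by simp) (by fun_prop) (by simp), hid,
        hL _ hkc hk0, hR _ hkc hk0,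
        ← cfcₙ_mul _ _ h hkc.continuousOn hk0 (by fun_prop) (by simp)]
    rw [sq, ← CStarRing.norm_star_mul_self, this]
    refine norm_cfcₙ_le fun t ht => ?_
    obtain ⟨h0, h1⟩ := hspec t ht
    rw [Real.norm_of_nonneg (by positivity)]
    exact hq t h0 h1
  rw [← SetLike.mem_coe, ← hc.closure_eq, Metric.mem_closure_iff]
  intro η hη
  obtain ⟨M, hM⟩ : ∃ M, M = ‖h‖ := ⟨_, rfl⟩
  have hM0 : 0 ≤ M := hM ▸ norm_nonneg h
  set ε := η^2/8 with hε
  have hε0 : 0 < ε := by positivity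
  set δ := η / (4 * (M+1)^2) with hδ
  have hδ0 : 0 < δ := by positivity
  obtain ⟨q, hq⟩ := exists_polynomial_near_of_continuousOn 0 (M^3)
    (fun v => 1 / max (v ^ ((3:ℕ):ℝ)⁻¹) ε) (by
      apply Continuous.continuousOn
      refine continuous_const.div ?_ (fun v => (lt_max_of_lt_right hε0).ne')
      exact (Real.continuous_rpow_const (by positivity)).max continuous_const) δ hδ0
  refine ⟨_, hpoly q, ?_⟩
  rw [dist_eq_norm]
  refine lt_of_pow_lt_pow_left₀ 2 hη.le ((hnorm q (η^2/2) (by positivity) ?_).trans_lt (by nlinarith [sq_pos_of_pos hη]))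
  intro t h0 h1
  rw [← hM] at h1
  have := hq (t^3) ⟨by positivity, by gcongr⟩
  rw [Real.pow_rpow_inv_natCast h0 (by norm_num)] at this
  set Q := q.eval (t^3)
  have hQ : (Q - 1 / max t ε)^2 ≤ δ^2 := by
    rw [← sq_abs]; gcongr
  have hg : t * (1 - t * (1 / max t ε))^2 ≤ ε := by
    rcases le_total ε t with h | h
    · rw [max_eq_left h, mul_one_div_cancel (by linarith)]; simpa using hε0.le
    · rw [max_eq_right h]
      have h3 : t * (1/ε) ≤ 1 := by rw [mul_one_div, div_le_one hε0]; exact h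
      have h4 : 0 ≤ t * (1/ε) := by positivity
      have : (1 - t * (1/ε))^2 ≤ 1 := by nlinarith
      nlinarith
  set g := 1 / max t ε
  have h3 : t^3 * (Q - g)^2 ≤ M^3 * δ^2 := by gcongr
  have h4 : M^3 * δ^2 ≤ η^2/16 := by
    have : (M+1)^4 * δ^2 = η^2/16 := by rw [hδ]; field_simp; norm_num
    rw [← this]
    gcongr
    calc M^3 ≤ (M+1)^3 := by gcongr; linarith
      _ ≤ (M+1)^4 := by apply pow_le_pow_right₀ <;> linarith
  have h5 : t * (1 - t * Q)^2 ≤ 2 * (t * (1 - t * g)^2) + 2 * (t^3 * (Q-g)^2) := by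
    have : 0 ≤ t * ((1 - t*g) + t * (Q - g))^2 := by positivity
    nlinarith
  nlinarith

theorem subtriple_generated_by_cube_eq
    {A : Type*} [NonUnitalNormedRing A] [StarRing A] [CStarRing A]
    [NormedSpace ℂ A] [IsScalarTower ℂ A A] [SMulCommClass ℂ A A]
    [StarModule ℂ A] [CompleteSpace A]
    (a : A) :
    ⋂₀ {S : Set A | IsClosedSubtriple S ∧ a ∈ S} =
      ⋂₀ {S : Set A | IsClosedSubtriple S ∧ a * star a * a ∈ S} := by
  congr 1
  ext S
  refine and_congr_right fun hS => ?_
  obtain ⟨hc, ⟨p, rfl⟩, hp⟩ := hS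
  constructor
  · intro ha
    have := hp a ha a ha a ha
    rw [← two_smul ℂ, smul_smul] at this
    simpa using this
  · intro hb
    letI : NonUnitalCStarAlgebra A := {}
    exact key a p hc hp hb
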